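/- Let u(x,y) = y/(2y+2) + (2xy − y²)/(2√(4xy(x−y)(y+2) + y²(y+1)²)), defined for real x, y with y ≠ 0, y ≠ −1 and 4xy(x−y)(y+2) + y²(y+1)² > 0. Then u satisfies the projective flow PDE for the vector field ϖ(x,y) = (−4x³ + 6x²y − 3xy²)/y, ϱ(x,y) = −y²: that is, u_x·((−4x³ + 6x²y − 3xy²)/y − x) + u_y·(−y² − y) = −u at every such point; moreover v(x,y) = y/(y+1) satisfies the same PDE. -/

import Mathlib

/-- The function `u(x,y) = y/(2y+2) + (2xy - y²)/(2√(4xy(x-y)(y+2) + y²(y+1)²))`. -/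
noncomputable def uConj (x y : ℝ) : ℝ :=
  y / (2 * y + 2) +
    (2 * x * y - y ^ 2) /
      (2 * Real.sqrt (4 * x * y * (x - y) * (y + 2) + y ^ 2 * (y + 1) ^ 2))

/-! Call `f` semi-invariant with cofactor `k` along a vector field if the derivative of `f` along it
is `k * f`; the projective flow PDE says that the cofactor along `(ϖ - x) • (ϱ - y)` is `-1`.
Cofactors add under products, change sign under inversion and are halved by square roots. For the
present field, `y`, `y + 1`, `L = 2x - y` (the second component of `ℓ`) and `M = (y + 2)L² + y` are
all semi-invariant, the radicand in `u` equals `yM`, and `u = (y/(y + 1) + yL/√(yM))/2`. Both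
summands turn out to have cofactor `-1`. -/

section Cofactor

variable {𝕜 E F : Type*} [NontriviallyNormedField 𝕜] [NormedAddCommGroup E] [NormedSpace 𝕜 E]
  [NormedAddCommGroup F] [NormedSpace 𝕜 F]

/-- `f` is infinitesimally semi-invariant at `p` in the direction `v`, with cofactor `k`: its
derivative in that direction is `k * f p`. With `f`, `k` and `v` polynomial in `p`, having this at
every point means that `f` is a Darboux polynomial. Only the value of the vector field at `p`
matters, so `v` is a single vector. -/
structure HasCofactorAt (f : E → 𝕜) (k : 𝕜) (v p : E) : Prop where
  differentiableAt : DifferentiableAt 𝕜 f p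
  fderiv_apply : fderiv 𝕜 f p v = k * f p

namespace HasCofactorAt

variable {f g : E → 𝕜} {k l : 𝕜} {v p : E}

theorem of_hasFDerivAt {f' : E →L[𝕜] 𝕜} (hf : HasFDerivAt f f' p) (hv : f' v = k * f p) :
    HasCofactorAt f k v p :=
  ⟨hf.differentiableAt, hf.fderiv ▸ hv⟩

theorem add (hf : HasCofactorAt f k v p) (hg : HasCofactorAt g k v p) :
    HasCofactorAt (fun q => f q + g q) k v p := by
  refine of_hasFDerivAt (hf.differentiableAt.hasFDerivAt.add hg.differentiableAt.hasFDerivAt) ?_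
  rw [add_apply, hf.fderiv_apply, hg.fderiv_apply, mul_add]

theorem mul (hf : HasCofactorAt f k v p) (hg : HasCofactorAt g l v p) :
    HasCofactorAt (fun q => f q * g q) (k + l) v p := by
  refine of_hasFDerivAt (hf.differentiableAt.hasFDerivAt.mul hg.differentiableAt.hasFDerivAt) ?_
  simp only [add_apply, smul_apply, smul_eq_mul, hf.fderiv_apply, hg.fderiv_apply]
  ring

/-- By Euler's relation, the condition on `φ` holds when `φ` is homogeneous of degree `d`. -/
theorem comp {φ : 𝕜 → 𝕜} {φ' d : 𝕜} (hφ : HasDerivAt φ φ' (f p)) (hd : φ' * f p = d * φ (f p))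
    (hf : HasCofactorAt f k v p) : HasCofactorAt (fun q => φ (f q)) (d * k) v p := by
  refine of_hasFDerivAt (hφ.comp_hasFDerivAt p hf.differentiableAt.hasFDerivAt) ?_
  rw [smul_apply, smul_eq_mul, hf.fderiv_apply]
  linear_combination k * hd

theorem const_mul (c : 𝕜) (hf : HasCofactorAt f k v p) :
    HasCofactorAt (fun q => c * f q) k v p := by
  simpa only [one_mul, id] using hf.comp (d := 1) ((hasDerivAt_id _).const_mul c) (by simp)

theorem inv (hf : HasCofactorAt f k v p) (h0 : f p ≠ 0) :
    HasCofactorAt (fun q => (f q)⁻¹) (-k) v p := by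
  simpa only [neg_one_mul] using hf.comp (d := -1) (hasDerivAt_inv h0) (by field_simp)

theorem div (hf : HasCofactorAt f k v p) (hg : HasCofactorAt g l v p) (h0 : g p ≠ 0) :
    HasCofactorAt (fun q => f q / g q) (k - l) v p := by
  simpa only [div_eq_mul_inv, sub_eq_add_neg] using hf.mul (hg.inv h0)

theorem sqrt [NormedSpace ℝ E] {f : E → ℝ} {k : ℝ} (hf : HasCofactorAt f k v p) (h0 : 0 < f p) :
    HasCofactorAt (fun q => √(f q)) (k / 2) v p := by
  have euler : 1 / (2 * √(f p)) * f p = 1 / 2 * √(f p) := by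
    have := Real.sqrt_pos.2 h0
    field_simp
    exact (Real.sq_sqrt h0.le).symm
  simpa only [one_div_mul_eq_div] using hf.comp (Real.hasDerivAt_sqrt h0.ne') euler

end HasCofactorAt

theorem deriv_smul_add_deriv_smul_eq_fderiv {f : 𝕜 × 𝕜 → F} {x y : 𝕜}
    (hf : DifferentiableAt 𝕜 f (x, y)) (a b : 𝕜) :
    a • deriv (fun t => f (t, y)) x + b • deriv (fun t => f (x, t)) y =
      fderiv 𝕜 f (x, y) (a, b) := by
  have hx : HasDerivAt (fun t => f (t, y)) (fderiv 𝕜 f (x, y) (1, 0)) x :=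
    hf.hasFDerivAt.comp_hasDerivAt x ((hasDerivAt_id x).prodMk (hasDerivAt_const x y))
  have hy : HasDerivAt (fun t => f (x, t)) (fderiv 𝕜 f (x, y) (0, 1)) y :=
    hf.hasFDerivAt.comp_hasDerivAt y ((hasDerivAt_const y x).prodMk (hasDerivAt_id y))
  rw [hx.deriv, hy.deriv, ← map_smul, ← map_smul, ← map_add]
  simp

theorem HasCofactorAt.deriv_mul_add_deriv_mul {f : 𝕜 × 𝕜 → 𝕜} {k x y a b : 𝕜}
    (hf : HasCofactorAt f k (a, b) (x, y)) :
    deriv (fun t => f (t, y)) x * a + deriv (fun t => f (x, t)) y * b = k * f (x, y) := by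
  rw [← hf.fderiv_apply, ← deriv_smul_add_deriv_smul_eq_fderiv hf.differentiableAt,
    smul_eq_mul, smul_eq_mul, mul_comm a, mul_comm b]

end Cofactor

/-- The direction `(ϖ(x,y) - x, ϱ(x,y) - y)` in which the projective flow PDE of the conjugated
vector field differentiates. -/
noncomputable def conjDirection (x y : ℝ) : ℝ × ℝ :=
  ((-4 * x ^ 3 + 6 * x ^ 2 * y - 3 * x * y ^ 2) / y - x, -y ^ 2 - y)

/-- The cubic semi-invariant `M = (y + 2)L² + y`, with `L = 2x - y`, of the conjugated vector
field. -/
def conjCubic (x y : ℝ) : ℝ :=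
  (y + 2) * (2 * x - y) ^ 2 + y

theorem uConj_radicand_eq (x y : ℝ) :
    4 * x * y * (x - y) * (y + 2) + y ^ 2 * (y + 1) ^ 2 = y * conjCubic x y := by
  rw [conjCubic]
  ring

theorem uConj_eq (x y : ℝ) :
    uConj x y =
      1 / 2 * (y / (y + 1)) + 1 / 2 * (y * (2 * x - y) / √(y * conjCubic x y)) := by
  have hden : 2 * y + 2 = 2 * (y + 1) := by ring
  have hnum : 2 * x * y - y ^ 2 = y * (2 * x - y) := by ring
  rw [uConj, uConj_radicand_eq, hden, hnum, div_mul_div_comm, div_mul_div_comm, one_mul, one_mul]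

theorem hasFDerivAt_two_mul_fst_sub_snd (p : ℝ × ℝ) :
    HasFDerivAt (fun q : ℝ × ℝ => 2 * q.1 - q.2)
      ((2 : ℝ) • ContinuousLinearMap.fst ℝ ℝ ℝ - ContinuousLinearMap.snd ℝ ℝ ℝ) p :=
  (hasFDerivAt_fst.const_mul 2).sub hasFDerivAt_snd

namespace conjDirection

theorem hasCofactorAt_snd (x y : ℝ) :
    HasCofactorAt (fun q : ℝ × ℝ => q.2) (-(y + 1)) (conjDirection x y) (x, y) := by
  refine .of_hasFDerivAt hasFDerivAt_snd ?_
  simp only [conjDirection, ContinuousLinearMap.coe_snd']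
  ring

theorem hasCofactorAt_snd_add_one (x y : ℝ) :
    HasCofactorAt (fun q : ℝ × ℝ => q.2 + 1) (-y) (conjDirection x y) (x, y) := by
  refine .of_hasFDerivAt (hasFDerivAt_snd.add_const 1) ?_
  simp only [conjDirection, ContinuousLinearMap.coe_snd']
  ring

variable {x y : ℝ}

theorem hasCofactorAt_two_mul_fst_sub_snd (hy : y ≠ 0) :
    HasCofactorAt (fun q : ℝ × ℝ => 2 * q.1 - q.2) (-((2 * x - y) ^ 2 / y + 1))
      (conjDirection x y) (x, y) := by
  refine .of_hasFDerivAt (hasFDerivAt_two_mul_fst_sub_snd _) ?_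
  simp only [conjDirection, sub_apply, smul_apply, ContinuousLinearMap.coe_fst',
    ContinuousLinearMap.coe_snd', smul_eq_mul]
  field_simp
  ring

theorem hasCofactorAt_conjCubic (hy : y ≠ 0) :
    HasCofactorAt (fun q : ℝ × ℝ => conjCubic q.1 q.2) (-(2 * (2 * x - y) ^ 2 / y + y + 1))
      (conjDirection x y) (x, y) := by
  refine .of_hasFDerivAt (((hasFDerivAt_snd.add_const 2).mul
    ((hasFDerivAt_two_mul_fst_sub_snd _).pow 2)).add hasFDerivAt_snd) ?_
  simp only [conjDirection, conjCubic, add_apply, smul_apply, sub_apply, smul_eq_mul, nsmul_eq_mul,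
    Nat.cast_ofNat, Nat.add_one_sub_one, pow_one, ContinuousLinearMap.coe_fst',
    ContinuousLinearMap.coe_snd']
  field_simp
  ring

theorem hasCofactorAt_snd_div_snd_add_one (x : ℝ) (hy1 : y ≠ -1) :
    HasCofactorAt (fun q : ℝ × ℝ => q.2 / (q.2 + 1)) (-1) (conjDirection x y) (x, y) := by
  have hden : y + 1 ≠ 0 := add_eq_zero_iff_eq_neg.not.2 hy1
  convert (hasCofactorAt_snd x y).div (hasCofactorAt_snd_add_one x y) hden using 1
  ring

theorem hasCofactorAt_mul_div_sqrt (hpos : 0 < y * conjCubic x y) :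
    HasCofactorAt (fun q : ℝ × ℝ => q.2 * (2 * q.1 - q.2) / √(q.2 * conjCubic q.1 q.2)) (-1)
      (conjDirection x y) (x, y) := by
  have hy : y ≠ 0 := left_ne_zero_of_mul hpos.ne'
  have hnum := (hasCofactorAt_snd x y).mul (hasCofactorAt_two_mul_fst_sub_snd hy)
  have hden := ((hasCofactorAt_snd x y).mul (hasCofactorAt_conjCubic hy)).sqrt hpos
  convert hnum.div hden (Real.sqrt_pos.2 hpos).ne' using 1
  ring

theorem hasCofactorAt_uConj (hy1 : y ≠ -1) (hpos : 0 < y * conjCubic x y) :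
    HasCofactorAt (fun q : ℝ × ℝ => uConj q.1 q.2) (-1) (conjDirection x y) (x, y) := by
  simp only [uConj_eq]
  exact ((hasCofactorAt_snd_div_snd_add_one x hy1).const_mul _).add
    ((hasCofactorAt_mul_div_sqrt hpos).const_mul _)

end conjDirection

/-- `u` satisfies the projective flow PDE for the vector field
`ϖ(x,y) = (-4x³ + 6x²y - 3xy²)/y`, `ϱ(x,y) = -y²`; moreover `v(x,y) = y/(y+1)` satisfies
the same PDE. -/
theorem conjugated_flow_satisfies_PDE (x y : ℝ) (hy : y ≠ 0) (hy1 : y ≠ -1)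
    (hpos : 4 * x * y * (x - y) * (y + 2) + y ^ 2 * (y + 1) ^ 2 > 0) :
    deriv (fun t => uConj t y) x *
        ((-4 * x ^ 3 + 6 * x ^ 2 * y - 3 * x * y ^ 2) / y - x) +
      deriv (fun t => uConj x t) y * (-y ^ 2 - y) = -uConj x y ∧
    deriv (fun _ => y / (y + 1) : ℝ → ℝ) x *
        ((-4 * x ^ 3 + 6 * x ^ 2 * y - 3 * x * y ^ 2) / y - x) +
      deriv (fun t => t / (t + 1)) y * (-y ^ 2 - y) = -(y / (y + 1)) := by
  rw [uConj_radicand_eq] at hpos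
  have hu := (conjDirection.hasCofactorAt_uConj hy1 hpos).deriv_mul_add_deriv_mul
  have hv := (conjDirection.hasCofactorAt_snd_div_snd_add_one x hy1).deriv_mul_add_deriv_mul
  rw [neg_one_mul] at hu hv
  exact ⟨hu, hv⟩
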